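/- arXiv:2602.18808 — 2 statements merged into one kernel-verified Lean document; each statement's English description precedes it below -/
import Mathlib

section
/- Let S be a random grouplike element of the tensor series space over ℝ^d (i.e., S satisfies the shuffle identity ⟨u, S⟩⟨v, S⟩ = ⟨u ⧢ v, S⟩ for all u, v in the shuffle algebra). Then for every integer p ≥ 1 and every k ≥ 0, E‖S^k‖^{2p} ≤ d^{k(2p−1)} (2p)^{2pk} ‖E S^{2pk}‖, where ‖·‖ denotes the projective tensor norm built from the ℓ¹ norm on ℝ^d. -/
open MeasureTheory
open scoped ENNReal

/- **Statement 5.**  We model tensor series over `ℝ^d` by their coordinates on the word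
basis: a tensor series is a function `S : List (Fin d) → ℝ`, with `⟨w, S⟩ = S w`.  The
degree-`k` component `S^k` is the restriction to words of length `k`, and its norm (the
projective tensor norm built from the ℓ¹ norm on `ℝ^d`) is `‖S^k‖ = Σ_{|w|=k} |S w|`. -/

/-- The shuffle product of two words, as an element of the shuffle algebra (a finitely
supported linear combination of words). -/
noncomputable def shuffle {d : ℕ} : List (Fin d) → List (Fin d) → (List (Fin d) →₀ ℝ)
  | [], v => Finsupp.single v 1
  | u, [] => Finsupp.single u 1
  | a :: u, b :: v =>
      Finsupp.mapDomain (a :: ·) (shuffle u (b :: v)) +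
      Finsupp.mapDomain (b :: ·) (shuffle (a :: u) v)
termination_by u v => u.length + v.length

/-- `S` is grouplike: it satisfies the shuffle identity `⟨u,S⟩⟨v,S⟩ = ⟨u ⧢ v, S⟩`. -/
def Grouplike {d : ℕ} (S : List (Fin d) → ℝ) : Prop :=
  ∀ u v : List (Fin d), S u * S v = (shuffle u v).sum fun w c => c * S w

/-- The ℓ¹/projective norm of the degree-`k` component of a tensor series. -/
noncomputable def normk (d k : ℕ) (S : List (Fin d) → ℝ) : ℝ :=
  ∑ f : Fin k → Fin d, |S (List.ofFn f)|

/-!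
Duality between the shuffle product and the unshuffle coproduct turns `⟨w, S⟩ ^ n` into
`⟨w ⊗ ⋯ ⊗ w, Δ_n S⟩`, a combination of coordinates of `S` that is linear and so commutes with the
expectation. Its coefficients are natural numbers: a word of length `N` has exactly `n ^ N`
unshufflings into `n` subwords, each letter choosing its subword, and one unshuffling serves at most
one `w`. So after summation over all words `w` of length `k` every word of length `nk` still has a
coefficient at most `n ^ (nk)`. Hölder's inequality relates `‖S^k‖ ^ n` to the sum of the
`⟨w, S⟩ ^ n`; the exponent `n` is even, which removes the absolute values.
-/

section Unshuffle

variable {α : Type*}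

/-- The unshuffle coproduct `Δ x = ∑ u ⊗ v` of a word `x`, encoded as the multiset of the pairs
`(u, v)` of complementary subwords of `x`, one for each subset of the letters of `x`. -/
def unshuffles : List α → Multiset (List α × List α)
  | [] => {([], [])}
  | a :: x => (unshuffles x).map (Prod.map (a :: ·) id) + (unshuffles x).map (Prod.map id (a :: ·))

/-- The `n`-fold iterated coproduct `Δ_n x = ∑ w₁ ⊗ ⋯ ⊗ wₙ` of a word `x`, encoded as the multiset
of the lists `[w₁, …, wₙ]`. Here `Δ_0` is the counit, which vanishes on nonempty words. -/
def iteratedUnshuffles : ℕ → List α → Multiset (List (List α))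
  | 0, [] => {[]}
  | 0, _ :: _ => 0
  | n + 1, x => (unshuffles x).bind fun q => (iteratedUnshuffles n q.2).map (q.1 :: ·)

lemma sum_pow_length_unshuffles {R : Type*} [CommSemiring R] (r : R) (x : List α) :
    ((unshuffles x).map fun q => r ^ q.2.length).sum = (1 + r) ^ x.length := by
  induction x with
  | nil => simp [unshuffles]
  | cons a x ih =>
    simp only [unshuffles, Multiset.map_add, Multiset.map_map, Function.comp_apply, Prod.map_snd,
      id_eq, List.length_cons, pow_succ, Multiset.sum_add, Multiset.sum_map_mul_right, ih]
    ring

lemma card_iteratedUnshuffles (n : ℕ) (x : List α) :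
    (iteratedUnshuffles n x).card = n ^ x.length := by
  induction n generalizing x with
  | zero => cases x <;> simp [iteratedUnshuffles]
  | succ n ih =>
    simp only [iteratedUnshuffles, Multiset.card_bind, Function.comp_def, Multiset.card_map, ih]
    exact (sum_pow_length_unshuffles n x).trans (by rw [add_comm])

lemma length_add_length_of_mem_unshuffles {x : List α} {q : List α × List α}
    (hq : q ∈ unshuffles x) : q.1.length + q.2.length = x.length := by
  induction x generalizing q with
  | nil => simp_all [unshuffles]
  | cons a x ih =>
    simp only [unshuffles, Multiset.mem_add, Multiset.mem_map] at hq
    rcases hq with ⟨r, hr, rfl⟩ | ⟨r, hr, rfl⟩ <;>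
      simp only [Prod.map_fst, Prod.map_snd, id_eq, List.length_cons, ← ih hr] <;> ring

lemma length_flatten_of_mem_iteratedUnshuffles {n : ℕ} {x : List α} {L : List (List α)}
    (hL : L ∈ iteratedUnshuffles n x) : L.flatten.length = x.length := by
  induction n generalizing x L with
  | zero => cases x <;> simp_all [iteratedUnshuffles]
  | succ n ih =>
    simp only [iteratedUnshuffles, Multiset.mem_bind, Multiset.mem_map] at hL
    obtain ⟨q, hq, L', hL', rfl⟩ := hL
    rw [List.flatten_cons, List.length_append, ih hL', length_add_length_of_mem_unshuffles hq]

variable [DecidableEq α]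

lemma count_map_cons (a b : α) (l : List α) (M : Multiset (List α)) :
    (M.map (b :: ·)).count (a :: l) = if a = b then M.count l else 0 := by
  split_ifs with h
  · subst h
    exact Multiset.count_map_eq_count' (a :: ·) M List.cons_injective l
  · simp [Ne.symm h]

lemma count_map_cons_fst (a c : α) (u v : List α) (M : Multiset (List α × List α)) :
    (M.map (Prod.map (c :: ·) id)).count (a :: u, v) = if a = c then M.count (u, v) else 0 := by
  split_ifs with h
  · subst h
    exact Multiset.count_map_eq_count' (Prod.map (a :: ·) id) M
      (List.cons_injective.prodMap Function.injective_id) (u, v)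
  · simp [Ne.symm h]

lemma count_map_cons_snd (b c : α) (u v : List α) (M : Multiset (List α × List α)) :
    (M.map (Prod.map id (c :: ·))).count (u, b :: v) = if b = c then M.count (u, v) else 0 := by
  split_ifs with h
  · subst h
    exact Multiset.count_map_eq_count' (Prod.map id (b :: ·)) M
      (Function.injective_id.prodMap List.cons_injective) (u, v)
  · simp [Ne.symm h]

lemma count_nil_left_unshuffles (v x : List α) :
    (unshuffles x).count ([], v) = if v = x then 1 else 0 := by
  induction x generalizing v with
  | nil => simp [unshuffles, Multiset.count_singleton]
  | cons c x ih =>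
    have hcons (M : Multiset (List α × List α)) :
        (M.map (Prod.map (c :: ·) id)).count ([], v) = 0 := by
      simp
    rw [unshuffles, Multiset.count_add, hcons, zero_add]
    cases v with
    | nil => simp
    | cons b v => rw [count_map_cons_snd, ih]; grind

lemma count_nil_right_unshuffles (u x : List α) :
    (unshuffles x).count (u, []) = if u = x then 1 else 0 := by
  induction x generalizing u with
  | nil => simp [unshuffles, Multiset.count_singleton]
  | cons c x ih =>
    have hcons (M : Multiset (List α × List α)) :
        (M.map (Prod.map id (c :: ·))).count (u, []) = 0 := by
      simp
    rw [unshuffles, Multiset.count_add, hcons, add_zero]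
    cases u with
    | nil => simp
    | cons a u => rw [count_map_cons_fst, ih]; grind

lemma count_cons_cons_unshuffles_cons (a b c : α) (u v x : List α) :
    (unshuffles (c :: x)).count (a :: u, b :: v) =
      (if a = c then (unshuffles x).count (u, b :: v) else 0) +
        if b = c then (unshuffles x).count (a :: u, v) else 0 := by
  rw [unshuffles, Multiset.count_add, count_map_cons_fst, count_map_cons_snd]

end Unshuffle

section Counting

variable {ι β γ : Type*}

lemma sum_count_le_card_of_injective [Fintype ι] [DecidableEq β] {f : ι → β}
    (hf : Function.Injective f) (M : Multiset β) : ∑ i, M.count (f i) ≤ M.card := by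
  classical
  calc ∑ i, M.count (f i)
      = ∑ b ∈ Finset.univ.image f, M.count b := by
        rw [Finset.sum_image hf.injOn]
    _ ≤ ∑ b ∈ Finset.univ.image f ∪ M.toFinset, M.count b :=
        Finset.sum_le_sum_of_subset Finset.subset_union_left
    _ = M.card := Multiset.sum_count_eq_card fun b hb =>
        Finset.mem_union_right _ (Multiset.mem_toFinset.2 hb)

lemma sum_mul_count_eq_sum_map {R : Type*} [CommSemiring R] [DecidableEq β] [DecidableEq γ]
    (f : γ →₀ R) (b : β) (M : Multiset (β × γ)) :
    (f.sum fun c r => r * (M.count (b, c) : R)) =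
      (M.map fun q => if b = q.1 then f q.2 else 0).sum := by
  induction M using Multiset.induction_on with
  | empty => simp
  | cons q M ih =>
    obtain ⟨b', c'⟩ := q
    simp only [Multiset.count_cons, Prod.mk.injEq, Nat.cast_add, mul_add, Finsupp.sum_add, ih,
      Multiset.map_cons, Multiset.sum_cons, add_comm]
    congr 1
    by_cases h : b = b' <;> simp [h, Finsupp.sum]

end Counting

section WordCombinations

variable {α R : Type*}

lemma mapDomain_cons_apply_nil [AddCommMonoid R] (a : α) (f : List α →₀ R) :
    Finsupp.mapDomain (a :: ·) f [] = 0 :=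
  Finsupp.mapDomain_of_notMem_range _ _ (by simp)

lemma mapDomain_cons_apply_cons [DecidableEq α] [AddCommMonoid R] (a c : α)
    (f : List α →₀ R) (x : List α) :
    Finsupp.mapDomain (a :: ·) f (c :: x) = if a = c then f x else 0 := by
  split_ifs with h
  · subst h
    exact Finsupp.mapDomain_apply List.cons_injective f x
  · exact Finsupp.mapDomain_of_notMem_range _ _ (by simp [h])

lemma linearCombination_eq_sum_ofFn [Semiring R] [Fintype α] {N : ℕ}
    {f : List α →₀ R} (hf : ∀ x, f x ≠ 0 → x.length = N) (S : List α → R) :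
    Finsupp.linearCombination R S f = ∑ t : Fin N → α, f (List.ofFn t) * S (List.ofFn t) := by
  classical
  rw [Finsupp.linearCombination_apply, Finsupp.sum_of_support_subset (s := Finset.univ.image
    fun t : Fin N → α => List.ofFn t), Finset.sum_image List.ofFn_injective.injOn]
  · rfl
  · intro x hx
    obtain rfl := hf x (Finsupp.mem_support_iff.1 hx)
    exact Finset.mem_image.2 ⟨x.get, Finset.mem_univ _, List.ofFn_get x⟩
  · simp

end WordCombinations

section Shuffle

variable {d : ℕ}

lemma shuffle_nil_left (v : List (Fin d)) : shuffle [] v = Finsupp.single v 1 := by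
  rw [shuffle]

lemma shuffle_nil_right (u : List (Fin d)) : shuffle u [] = Finsupp.single u 1 := by
  cases u <;> simp [shuffle]

lemma shuffle_apply (u v x : List (Fin d)) : shuffle u v x = (unshuffles x).count (u, v) := by
  rcases u with _ | ⟨a, u⟩
  · simp [shuffle_nil_left, Finsupp.single_apply, count_nil_left_unshuffles]
  rcases v with _ | ⟨b, v⟩
  · simp [shuffle_nil_right, Finsupp.single_apply, count_nil_right_unshuffles]
  rcases x with _ | ⟨c, x⟩
  · simp [shuffle, unshuffles, mapDomain_cons_apply_nil]
  rw [shuffle, Finsupp.add_apply, mapDomain_cons_apply_cons, mapDomain_cons_apply_cons,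
    shuffle_apply u (b :: v) x, shuffle_apply (a :: u) v x, count_cons_cons_unshuffles_cons]
  push_cast
  rfl

/-- The iterated shuffle product `w₁ ⧢ ⋯ ⧢ wₙ` of a list of words `[w₁, …, wₙ]`. -/
noncomputable def iteratedShuffle : List (List (Fin d)) → (List (Fin d) →₀ ℝ)
  | [] => Finsupp.single [] 1
  | w :: L => Finsupp.linearCombination ℝ (shuffle w) (iteratedShuffle L)

lemma iteratedShuffle_apply (L : List (List (Fin d))) (x : List (Fin d)) :
    iteratedShuffle L x = (iteratedUnshuffles L.length x).count L := by
  induction L generalizing x with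
  | nil => cases x <;> simp [iteratedShuffle, iteratedUnshuffles]
  | cons w L ih =>
    calc iteratedShuffle (w :: L) x
        = (iteratedShuffle L).sum fun u r => r * ((unshuffles x).count (w, u) : ℝ) := by
          simp only [iteratedShuffle, Finsupp.linearCombination_apply, Finsupp.sum,
            Finsupp.finsetSum_apply, Finsupp.smul_apply, smul_eq_mul, shuffle_apply]
      _ = ((unshuffles x).map fun q => if w = q.1 then iteratedShuffle L q.2 else 0).sum :=
          sum_mul_count_eq_sum_map _ _ _
      _ = (iteratedUnshuffles (w :: L).length x).count (w :: L) := by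
          simp only [List.length_cons, iteratedUnshuffles, Multiset.count_bind, count_map_cons, ih,
            Nat.cast_multiset_sum, Multiset.map_map, Function.comp_apply, Nat.cast_ite,
            Nat.cast_zero]

lemma length_eq_of_iteratedShuffle_apply_ne_zero {L : List (List (Fin d))} {x : List (Fin d)}
    (h : iteratedShuffle L x ≠ 0) : x.length = L.flatten.length := by
  rw [iteratedShuffle_apply, Nat.cast_ne_zero, Multiset.count_ne_zero] at h
  exact (length_flatten_of_mem_iteratedUnshuffles h).symm

end Shuffle

namespace Grouplike

variable {d : ℕ} {S : List (Fin d) → ℝ}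

lemma apply_mul_apply_nil (hS : Grouplike S) (w : List (Fin d)) : S w * S [] = S w := by
  simpa [shuffle_nil_right] using hS w []

lemma linearCombination_iteratedShuffle (hS : Grouplike S) (L : List (List (Fin d))) :
    Finsupp.linearCombination ℝ S (iteratedShuffle L) = (L.map S).prod * S [] := by
  induction L with
  | nil => simp [iteratedShuffle]
  | cons w L ih =>
    have pairing_shuffle : Finsupp.linearCombination ℝ S ∘ₗ
        Finsupp.linearCombination ℝ (shuffle w) = S w • Finsupp.linearCombination ℝ S := by
      ext v
      simp [hS w v, Finsupp.linearCombination_apply]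
    calc Finsupp.linearCombination ℝ S (iteratedShuffle (w :: L))
        = S w * Finsupp.linearCombination ℝ S (iteratedShuffle L) :=
          LinearMap.congr_fun pairing_shuffle (iteratedShuffle L)
      _ = ((w :: L).map S).prod * S [] := by rw [ih, List.map_cons, List.prod_cons, mul_assoc]

lemma pow_eq_sum_count_mul (hS : Grouplike S) {n k : ℕ} (hn : n ≠ 0)
    {w : List (Fin d)} (hw : w.length = k) :
    S w ^ n = ∑ t : Fin (n * k) → Fin d,
      (iteratedUnshuffles n (List.ofFn t)).count (List.replicate n w) * S (List.ofFn t) := by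
  have hlength (x) (hx : iteratedShuffle (List.replicate n w) x ≠ 0) : x.length = n * k := by
    simpa [hw] using length_eq_of_iteratedShuffle_apply_ne_zero hx
  have hpairing := hS.linearCombination_iteratedShuffle (List.replicate n w)
  rw [linearCombination_eq_sum_ofFn hlength, List.map_replicate, List.prod_replicate] at hpairing
  simp only [iteratedShuffle_apply, List.length_replicate] at hpairing
  obtain ⟨m, rfl⟩ := Nat.exists_eq_add_one_of_ne_zero hn
  rw [hpairing, pow_succ, mul_assoc, hS.apply_mul_apply_nil]

end Grouplike

/-- The number of ways to unshuffle `x` into `n` copies of one word of length `k`. This is the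
coefficient of `x` in `∑ w^{⧢n}`, the sum running over all words `w` of length `k`. -/
def powerUnshuffleCount {d : ℕ} (n k : ℕ) (x : List (Fin d)) : ℕ :=
  ∑ s : Fin k → Fin d, (iteratedUnshuffles n x).count (List.replicate n (List.ofFn s))

lemma powerUnshuffleCount_le {d n : ℕ} (hn : n ≠ 0) (k : ℕ) (x : List (Fin d)) :
    powerUnshuffleCount n k x ≤ n ^ x.length := by
  have hinj : Function.Injective fun s : Fin k → Fin d => List.replicate n (List.ofFn s) :=
    (List.replicate_right_injective hn).comp List.ofFn_injective
  exact (sum_count_le_card_of_injective hinj _).trans_eq (card_iteratedUnshuffles n x)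

lemma normk_nonneg (d k : ℕ) (S : List (Fin d) → ℝ) : 0 ≤ normk d k S :=
  Finset.sum_nonneg fun _ _ => abs_nonneg _

lemma normk_pow_le_sum_pow {d n : ℕ} (hn : Even n) (hn₀ : n ≠ 0) (k : ℕ) (S : List (Fin d) → ℝ) :
    normk d k S ^ n ≤ (d : ℝ) ^ (k * (n - 1)) * ∑ s : Fin k → Fin d, S (List.ofFn s) ^ n := by
  obtain ⟨m, rfl⟩ := Nat.exists_eq_add_one_of_ne_zero hn₀
  have hölder := pow_sum_le_card_mul_sum_pow (s := Finset.univ)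
    (f := fun s : Fin k → Fin d => |S (List.ofFn s)|) (fun _ _ => abs_nonneg _) m
  simpa [normk, hn.pow_abs, pow_mul] using hölder

lemma Grouplike.normk_pow_le {d n : ℕ} {S : List (Fin d) → ℝ} (hS : Grouplike S) (hn : Even n)
    (hn₀ : n ≠ 0) (k : ℕ) :
    normk d k S ^ n ≤ ∑ t : Fin (n * k) → Fin d,
      (d : ℝ) ^ (k * (n - 1)) * powerUnshuffleCount n k (List.ofFn t) * S (List.ofFn t) := by
  refine (normk_pow_le_sum_pow hn hn₀ k S).trans_eq ?_
  simp only [hS.pow_eq_sum_count_mul hn₀ List.length_ofFn, powerUnshuffleCount, Nat.cast_sum,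
    mul_assoc, ← Finset.mul_sum, Finset.sum_mul]
  rw [Finset.sum_comm]

lemma lintegral_ofReal_le_of_le_sum_mul {ι Ω : Type*} [Fintype ι] [MeasurableSpace Ω]
    {μ : Measure Ω} {f : Ω → ℝ} {g : ι → Ω → ℝ} {c : ι → ℝ} {C : ℝ} (hf : 0 ≤ᵐ[μ] f)
    (hfg : ∀ᵐ ω ∂μ, f ω ≤ ∑ i, c i * g i ω) (hg : ∀ i, Integrable (g i) μ)
    (hc : ∀ i, |c i| ≤ C) :
    ∫⁻ ω, ENNReal.ofReal (f ω) ∂μ ≤ ENNReal.ofReal (C * ∑ i, |∫ ω, g i ω ∂μ|) := by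
  have hint (i) : Integrable (fun ω => c i * g i ω) μ := (hg i).const_mul (c i)
  calc ∫⁻ ω, ENNReal.ofReal (f ω) ∂μ
      ≤ ∫⁻ ω, ENNReal.ofReal (∑ i, c i * g i ω) ∂μ :=
        lintegral_mono_ae (hfg.mono fun _ => ENNReal.ofReal_le_ofReal)
    _ = ENNReal.ofReal (∫ ω, ∑ i, c i * g i ω ∂μ) :=
        (ofReal_integral_eq_lintegral_ofReal (integrable_finsetSum _ fun i _ => hint i)
          (hf.trans hfg)).symm
    _ = ENNReal.ofReal (∑ i, c i * ∫ ω, g i ω ∂μ) := by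
        rw [integral_finsetSum _ fun i _ => hint i]
        simp only [integral_const_mul]
    _ ≤ ENNReal.ofReal (C * ∑ i, |∫ ω, g i ω ∂μ|) := by
        rw [Finset.mul_sum]
        refine ENNReal.ofReal_le_ofReal (Finset.sum_le_sum fun i _ => (le_abs_self _).trans ?_)
        rw [abs_mul]
        gcongr
        exact hc i

theorem grouplike_moment_bound_general {d : ℕ} {Ω : Type*} [MeasurableSpace Ω] {μ : Measure Ω}
    {S : Ω → List (Fin d) → ℝ} {n : ℕ} (hn : Even n) (hn₀ : n ≠ 0) (k : ℕ)
    (hS : ∀ᵐ ω ∂μ, Grouplike (S ω))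
    (hint : ∀ w : List (Fin d), w.length = n * k → Integrable (fun ω => S ω w) μ) :
    ∫⁻ ω, ENNReal.ofReal (normk d k (S ω) ^ n) ∂μ ≤
      ENNReal.ofReal ((d : ℝ) ^ (k * (n - 1)) * (n : ℝ) ^ (n * k) *
        normk d (n * k) fun w => ∫ ω, S ω w ∂μ) := by
  refine lintegral_ofReal_le_of_le_sum_mul
    (.of_forall fun ω => pow_nonneg (normk_nonneg d k (S ω)) n)
    (hS.mono fun ω hω => hω.normk_pow_le hn hn₀ k)
    (fun t => hint _ List.length_ofFn) fun t => ?_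
  have hcount : (powerUnshuffleCount n k (List.ofFn t) : ℝ) ≤ (n : ℝ) ^ (n * k) := by
    simpa using Nat.cast_le (α := ℝ).2 (powerUnshuffleCount_le hn₀ k (List.ofFn t))
  rw [abs_of_nonneg (by positivity)]
  gcongr

/-- Moment bound for grouplike random tensor series:
`E ‖S^k‖^{2p} ≤ d^{k(2p−1)} (2p)^{2pk} ‖E S^{2pk}‖`. -/
theorem grouplike_moment_bound {d : ℕ} {Ω : Type*} [MeasurableSpace Ω]
    (μ : Measure Ω) [IsProbabilityMeasure μ]
    (S : Ω → List (Fin d) → ℝ)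
    (hG : ∀ ω, Grouplike (S ω))
    (hint : ∀ w : List (Fin d), Integrable (fun ω => S ω w) μ)
    (p : ℕ) (hp : 1 ≤ p) (k : ℕ) :
    ∫⁻ ω, ENNReal.ofReal (normk d k (S ω) ^ (2 * p)) ∂μ ≤
      ENNReal.ofReal ((d : ℝ) ^ (k * (2 * p - 1)) * ((2 * p : ℕ) : ℝ) ^ (2 * p * k) *
        ∑ f : Fin (2 * p * k) → Fin d, |∫ ω, S ω (List.ofFn f) ∂μ|) :=
  grouplike_moment_bound_general (even_two_mul p) (by lia) k (.of_forall hG) fun w _ => hint w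
end

section
/- Every word over the alphabet {0,1,…,d} ending in 0, when evaluated on the Itô signature of time-augmented Brownian motion over [0,T], equals the evaluation of some linear combination of words not ending in 0: for every word w there exists ρ in the span of words not ending in 0 with ⟨w0, Ŝ(B̃)_{0,T}⟩ = ⟨ρ, Ŝ(B̃)_{0,T}⟩ almost surely. Hence the quasi-shuffle algebra decomposes as N ⊕ Sh°, where N is the nullspace of the induced bilinear form and Sh° is spanned by words not ending in 0. -/
open MeasureTheory

/- **Statement 16.**  Setting as for the Itô signature of time-augmented Brownian motion:
`X w t ω` are the Itô signature coordinates indexed by words over `{0,1,…,d}` (`0` the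
time letter), satisfying the quasi-shuffle product rule, with the second-moment structure
dictated by Itô calculus.  Conclusions: any word ending in `0` evaluates (a.s.) like a
linear combination of words not ending in `0`; hence the quasi-shuffle algebra decomposes
as `N ⊕ Sh°`, `N` the nullspace of the induced bilinear form and `Sh°` the span of words
not ending in `0`. -/

noncomputable def qsh {d : ℕ} :
    List (Fin (d + 1)) → List (Fin (d + 1)) → (List (Fin (d + 1)) →₀ ℝ)
  | [], v => Finsupp.single v 1
  | u, [] => Finsupp.single u 1
  | a :: u, b :: v =>
      Finsupp.mapDomain (a :: ·) (qsh u (b :: v)) +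
      Finsupp.mapDomain (b :: ·) (qsh (a :: u) v) +
      (if a = b ∧ a ≠ 0 then Finsupp.mapDomain ((0 : Fin (d + 1)) :: ·) (qsh u v) else 0)
termination_by u v => u.length + v.length

noncomputable def itoIP {d : ℕ} (t : ℝ) (u v : List (Fin (d + 1))) : ℝ :=
  (qsh u v).sum fun w c =>
    c * (if ∀ a ∈ w, a = 0 then t ^ w.length / w.length.factorial else 0)

/-!
Let `D₀` remove a trailing `0` and let `S` be the quasi-shuffle with the letter `0`. Since
`⟨0, Ŝ⟩ = t` is deterministic, the form `B_t(u, v) = E[⟨u, Ŝ⟩⟨v, Ŝ⟩]` satisfies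
`B_t(S x, y) = t B_t(x, y)`, so the range of `t - S` lies in its nullspace. Because `[D₀, S] = 1`,
the normal-ordered exponential `∑ (t - S)^k D₀^k / k!` maps every `x` to some `ρ` with `D₀ ρ = 0`
that is congruent to `x` modulo the range of `t - S`.

By Itô's product rule, `B` solves a linear differential equation in `t` whose right-hand side only
involves shorter words. For `D₀ ρ = 0` the equation says that `B_t(ρ, ρ)` has derivative
`∑ᵢ B_t(Dᵢ ρ, Dᵢ ρ) ≥ 0`. So if `B_T(ρ, ρ) = 0` then `B_t(ρ, ρ)` vanishes on all of `[0, T]`, and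
differentiating shows letter by letter that `ρ = 0`.
-/

namespace QuasiShuffle

/-! ### Normal ordering -/

section NormalOrderedExp

theorem mul_pow_succ_of_mul_eq_mul_sub_one {R : Type*} [Ring R] {a b : R} (h : a * b = b * a - 1)
    (n : ℕ) : a * b ^ (n + 1) = b ^ (n + 1) * a - (n + 1) • b ^ n := by
  induction n with
  | zero => simpa using h
  | succ n ih =>
    rw [pow_succ, ← mul_assoc, ih, sub_mul, mul_assoc, h, smul_mul_assoc, ← pow_succ, mul_sub,
      mul_one, ← mul_assoc, ← pow_succ, succ_nsmul _ (n + 1)]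
    abel

variable (𝕜 : Type*) {R : Type*} [Field 𝕜] [Ring R] [Algebra 𝕜 R]

/-- The terms of degree less than `n` of the normal-ordered exponential of `b * a`, in which every
`b` is written to the left of every `a`. If `a * b = b * a - 1`, it maps the kernel of `a ^ n` into
the kernel of `a`, and it differs from the identity by a right multiple of `b`. -/
noncomputable def normalOrderedExp (b a : R) (n : ℕ) : R :=
  ∑ k ∈ Finset.range n, (k.factorial : 𝕜)⁻¹ • (b ^ k * a ^ k)

theorem mul_normalOrderedExp_succ [CharZero 𝕜] {a b : R} (h : a * b = b * a - 1) (n : ℕ) :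
    a * normalOrderedExp 𝕜 b a (n + 1) = (n.factorial : 𝕜)⁻¹ • (b ^ n * a ^ (n + 1)) := by
  rw [normalOrderedExp]
  induction n with
  | zero => simp
  | succ n ih =>
    have coeff : ((n + 1).factorial : 𝕜)⁻¹ * (n + 1 : 𝕜) = (n.factorial : 𝕜)⁻¹ := by
      rw [Nat.factorial_succ]
      push_cast
      field_simp
    rw [Finset.sum_range_succ, mul_add, ih, mul_smul_comm, ← mul_assoc,
      mul_pow_succ_of_mul_eq_mul_sub_one h, sub_mul, smul_sub, smul_mul_assoc, mul_assoc,
      ← pow_succ', ← Nat.cast_smul_eq_nsmul 𝕜, smul_smul, Nat.cast_succ, coeff]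
    abel

theorem exists_normalOrderedExp_succ_eq_one_add_mul (b a : R) (n : ℕ) :
    ∃ c, normalOrderedExp 𝕜 b a (n + 1) = 1 + b * c := by
  refine ⟨∑ k ∈ Finset.range n, ((k + 1).factorial : 𝕜)⁻¹ • (b ^ k * a ^ (k + 1)), ?_⟩
  rw [normalOrderedExp, Finset.sum_range_succ', Finset.mul_sum, add_comm]
  congr 1
  · simp
  · simp [pow_succ', mul_assoc]

end NormalOrderedExp

/-! ### Second moments of linear combinations -/

section SecondMoments

variable {Ω ι : Type*} {X : ι → Ω → ℝ}

theorem linearCombination_apply_apply (x : ι →₀ ℝ) (ω : Ω) :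
    Finsupp.linearCombination ℝ X x ω = x.sum fun i c ↦ c * X i ω := by
  simp [Finsupp.linearCombination_apply, Finsupp.sum, Finset.sum_apply]

theorem sub_sq_sum_eq_linearCombination_mul (x y : ι →₀ ℝ) :
    (fun ω ↦ ((x.sum fun i c ↦ c * X i ω) - y.sum fun i c ↦ c * X i ω) ^ 2) =
      Finsupp.linearCombination ℝ X (x - y) * Finsupp.linearCombination ℝ X (x - y) := by
  funext ω
  simp only [Pi.mul_apply, map_sub, Pi.sub_apply, linearCombination_apply_apply, sq]

variable [MeasurableSpace Ω] {μ : Measure Ω}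

theorem integrable_linearCombination_mul (h_int : ∀ i j, Integrable (fun ω ↦ X i ω * X j ω) μ)
    (x y : ι →₀ ℝ) :
    Integrable (Finsupp.linearCombination ℝ X x * Finsupp.linearCombination ℝ X y) μ := by
  induction x using Finsupp.induction_linear with
  | zero => simp
  | add x₁ x₂ h₁ h₂ => simpa only [map_add, add_mul] using h₁.add h₂
  | single i a =>
    induction y using Finsupp.induction_linear with
    | zero => simp
    | add y₁ y₂ h₁ h₂ => simpa only [map_add, mul_add] using h₁.add h₂
    | single j b =>
      simpa only [Finsupp.linearCombination_single, smul_mul_smul_comm] using!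
        (h_int i j).smul (a * b)

theorem integral_linearCombination_mul (h_int : ∀ i j, Integrable (fun ω ↦ X i ω * X j ω) μ)
    {B : LinearMap.BilinForm ℝ (ι →₀ ℝ)}
    (hB : ∀ i j, ∫ ω, X i ω * X j ω ∂μ = B (Finsupp.single i 1) (Finsupp.single j 1))
    (x y : ι →₀ ℝ) :
    ∫ ω, (Finsupp.linearCombination ℝ X x * Finsupp.linearCombination ℝ X y) ω ∂μ = B x y := by
  have integrable := integrable_linearCombination_mul h_int
  let moment : LinearMap.BilinForm ℝ (ι →₀ ℝ) := LinearMap.mk₂ ℝ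
    (fun x y ↦ ∫ ω, (Finsupp.linearCombination ℝ X x * Finsupp.linearCombination ℝ X y) ω ∂μ)
    (fun x₁ x₂ y ↦ by
      simpa only [map_add, add_mul] using! integral_add (integrable x₁ y) (integrable x₂ y))
    (fun c x y ↦ by simpa only [map_smul, smul_mul_assoc] using! integral_smul c _)
    (fun x y₁ y₂ ↦ by
      simpa only [map_add, mul_add] using! integral_add (integrable x y₁) (integrable x y₂))
    (fun c x y ↦ by simpa only [map_smul, mul_smul_comm] using! integral_smul c _)
  suffices moment = B from LinearMap.congr_fun₂ this x y
  ext i j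
  simpa [moment] using hB i j

theorem ae_eq_of_integral_sub_sq_eq_zero {f g : Ω → ℝ}
    (h_int : Integrable (fun ω ↦ (f ω - g ω) ^ 2) μ) (h : ∫ ω, (f ω - g ω) ^ 2 ∂μ = 0) :
    f =ᵐ[μ] g := by
  filter_upwards [(integral_eq_zero_iff_of_nonneg (fun ω ↦ sq_nonneg (f ω - g ω)) h_int).1 h]
    with ω hω
  exact sub_eq_zero.1 (pow_eq_zero_iff two_ne_zero |>.1 hω)

end SecondMoments

/-! ### The quasi-shuffle product -/

/-- The vector space spanned by the words over `{0, 1, …, d}`. -/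
abbrev WordSpace (d : ℕ) := List (Fin (d + 1)) →₀ ℝ

variable {d : ℕ}

/-- The linear operator `w ↦ aw`. -/
noncomputable def prependLetter (a : Fin (d + 1)) : WordSpace d →ₗ[ℝ] WordSpace d :=
  Finsupp.lmapDomain ℝ ℝ (a :: ·)

/-- The linear operator `w ↦ wa`. -/
noncomputable def appendLetter (a : Fin (d + 1)) : WordSpace d →ₗ[ℝ] WordSpace d :=
  Finsupp.lmapDomain ℝ ℝ (· ++ [a])

/-- The linear operator sending `wa` to `w` and every word not ending in `a` to `0`: it extracts the
integrand of the outermost integral against the letter `a`. -/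
noncomputable def dropLetter (a : Fin (d + 1)) : WordSpace d →ₗ[ℝ] WordSpace d :=
  Finsupp.lcomapDomain (· ++ [a]) (List.append_left_injective [a])

theorem prependLetter_single (a : Fin (d + 1)) (w : List (Fin (d + 1))) (c : ℝ) :
    prependLetter a (Finsupp.single w c) = Finsupp.single (a :: w) c :=
  Finsupp.mapDomain_single

theorem prependLetter_apply_nil (a : Fin (d + 1)) (x : WordSpace d) : prependLetter a x [] = 0 :=
  Finsupp.mapDomain_of_notMem_range _ _ (by simp)

theorem appendLetter_single (a : Fin (d + 1)) (w : List (Fin (d + 1))) (c : ℝ) :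
    appendLetter a (Finsupp.single w c) = Finsupp.single (w ++ [a]) c :=
  Finsupp.mapDomain_single

theorem appendLetter_prependLetter (a b : Fin (d + 1)) (x : WordSpace d) :
    appendLetter a (prependLetter b x) = prependLetter b (appendLetter a x) := by
  simp only [appendLetter, prependLetter, Finsupp.lmapDomain_apply, ← Finsupp.mapDomain_comp]
  rfl

theorem dropLetter_apply (a : Fin (d + 1)) (x : WordSpace d) (w : List (Fin (d + 1))) :
    dropLetter a x w = x (w ++ [a]) := rfl

theorem dropLetter_single_nil (a : Fin (d + 1)) (c : ℝ) :
    dropLetter a (Finsupp.single [] c) = 0 := by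
  ext w
  simp [dropLetter_apply]

theorem dropLetter_appendLetter (a b : Fin (d + 1)) (x : WordSpace d) :
    dropLetter a (appendLetter b x) = if b = a then x else 0 := by
  split_ifs with h
  · subst h
    exact Finsupp.leftInverse_lcomapDomain_mapDomain _ (List.append_left_injective [b]) x
  · ext w
    exact Finsupp.mapDomain_of_notMem_range _ _ (by simp [h])

theorem qsh_nil_left (v : List (Fin (d + 1))) : qsh [] v = Finsupp.single v 1 := by
  rw [qsh]

theorem qsh_nil_right (u : List (Fin (d + 1))) : qsh u [] = Finsupp.single u 1 := by
  cases u <;> rw [qsh]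
  exact List.cons_ne_nil _ _

/-- The rate `d⟨B^a, B^b⟩ / dt` of the covariation of the components of `(t, B¹, …, B^d)`. -/
noncomputable def covariationRate (a b : Fin (d + 1)) : ℝ := if a = b ∧ a ≠ 0 then 1 else 0

theorem qsh_cons_cons (a b : Fin (d + 1)) (u v : List (Fin (d + 1))) :
    qsh (a :: u) (b :: v) = prependLetter a (qsh u (b :: v)) + prependLetter b (qsh (a :: u) v) +
      covariationRate a b • prependLetter 0 (qsh u v) := by
  rw [qsh, covariationRate, ite_smul, one_smul, zero_smul]
  rfl

theorem qsh_concat_concat (a b : Fin (d + 1)) : ∀ u v : List (Fin (d + 1)),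
    qsh (u ++ [a]) (v ++ [b]) =
      appendLetter a (qsh u (v ++ [b])) + appendLetter b (qsh (u ++ [a]) v) +
        covariationRate a b • appendLetter 0 (qsh u v)
  | [], [] => by
    simp only [List.nil_append, List.cons_append, qsh_cons_cons, qsh_nil_left, qsh_nil_right,
      appendLetter_single, prependLetter_single]
    module
  | [], c :: v => by
    have ih := qsh_concat_concat a b [] v
    simp only [List.nil_append, List.cons_append, qsh_cons_cons, qsh_nil_left] at ih ⊢
    simp only [ih, map_add, map_smul, appendLetter_prependLetter, appendLetter_single,
      prependLetter_single, List.cons_append]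
    module
  | c :: u, [] => by
    have ih := qsh_concat_concat a b u []
    simp only [List.nil_append, List.cons_append, qsh_cons_cons, qsh_nil_right] at ih ⊢
    simp only [ih, map_add, map_smul, appendLetter_prependLetter, appendLetter_single,
      prependLetter_single, List.cons_append]
    module
  | c :: u, e :: v => by
    have ih₁ := qsh_concat_concat a b u (e :: v)
    have ih₂ := qsh_concat_concat a b (c :: u) v
    have ih₃ := qsh_concat_concat a b u v
    simp only [List.cons_append] at ih₁ ih₂ ⊢
    simp only [qsh_cons_cons c e, ih₁, ih₂, ih₃, map_add, map_smul, appendLetter_prependLetter]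
    module
termination_by u v => u.length + v.length

theorem qsh_apply_nil (u v : List (Fin (d + 1))) :
    qsh u v [] = Finsupp.single u 1 [] * Finsupp.single v (1 : ℝ) [] := by
  rcases u with - | ⟨a, u⟩
  · simp [qsh_nil_left]
  rcases v with - | ⟨b, v⟩
  · simp [qsh_nil_right]
  simp [qsh_cons_cons, prependLetter_apply_nil]

/-- The quasi-shuffle product, i.e. the bilinear extension of `qsh`. -/
noncomputable def qshMul : WordSpace d →ₗ[ℝ] WordSpace d →ₗ[ℝ] WordSpace d :=
  Finsupp.linearCombination ℝ fun u ↦ Finsupp.linearCombination ℝ fun v ↦ qsh u v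

theorem qshMul_single_single (u v : List (Fin (d + 1))) :
    qshMul (Finsupp.single u 1) (Finsupp.single v 1) = qsh u v := by
  simp [qshMul]

theorem qshMul_apply_nil (x y : WordSpace d) : qshMul x y [] = x [] * y [] := by
  suffices qshMul.compr₂ (Finsupp.lapply []) =
      (LinearMap.mul ℝ ℝ).compl₁₂ (Finsupp.lapply []) (Finsupp.lapply []) from
    LinearMap.congr_fun₂ this x y
  ext u v
  simpa [qshMul_single_single] using qsh_apply_nil u v

theorem qshMul_one (x : WordSpace d) : qshMul x (Finsupp.single [] 1) = x := by
  suffices qshMul.flip (Finsupp.single [] 1) = LinearMap.id from LinearMap.congr_fun this x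
  ext u : 2
  simp [qshMul_single_single, qsh_nil_right]

theorem one_qshMul (x : WordSpace d) : qshMul (Finsupp.single [] 1) x = x := by
  suffices qshMul (Finsupp.single [] 1) = LinearMap.id from LinearMap.congr_fun this x
  ext u : 2
  simp [qshMul_single_single, qsh_nil_left]

theorem qshMul_appendLetter_appendLetter (a b : Fin (d + 1)) (x y : WordSpace d) :
    qshMul (appendLetter a x) (appendLetter b y) =
      appendLetter a (qshMul x (appendLetter b y)) + appendLetter b (qshMul (appendLetter a x) y) +
        covariationRate a b • appendLetter 0 (qshMul x y) := by
  suffices qshMul.compl₁₂ (appendLetter a) (appendLetter b) =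
      (qshMul.compl₂ (appendLetter b)).compr₂ (appendLetter a) +
        (qshMul.comp (appendLetter a)).compr₂ (appendLetter b) +
        covariationRate a b • qshMul.compr₂ (appendLetter 0) from
    LinearMap.congr_fun₂ this x y
  ext u v : 4
  simpa [appendLetter_single, qshMul_single_single] using qsh_concat_concat a b u v

theorem linearMap_ext_appendLetter {M : Type*} [AddCommGroup M] [Module ℝ M]
    {f g : WordSpace d →ₗ[ℝ] M} (nil : f (Finsupp.single [] 1) = g (Finsupp.single [] 1))
    (append : ∀ a x, f (appendLetter a x) = g (appendLetter a x)) : f = g := by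
  refine Finsupp.lhom_ext' fun w ↦ LinearMap.ext_ring ?_
  rcases List.eq_nil_or_concat' w with rfl | ⟨u, a, rfl⟩
  · exact nil
  · simpa [appendLetter_single] using append a (Finsupp.single u 1)

/-- The `dt`-part of Itô's product rule `d(XY) = X dY + Y dX + d⟨X, Y⟩`: the letter `0` integrates
against time, the letters `1, …, d` against independent Brownian motions, and `F x y` stands for
the product of the processes of `x` and `y`. -/
noncomputable def itoDrift {M : Type*} [AddCommGroup M] [Module ℝ M]
    (F : WordSpace d →ₗ[ℝ] WordSpace d →ₗ[ℝ] M) : WordSpace d →ₗ[ℝ] WordSpace d →ₗ[ℝ] M :=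
  F.comp (dropLetter 0) + F.compl₂ (dropLetter 0) +
    ∑ i : Fin d, F.compl₁₂ (dropLetter i.succ) (dropLetter i.succ)

theorem itoDrift_apply {M : Type*} [AddCommGroup M] [Module ℝ M]
    (F : WordSpace d →ₗ[ℝ] WordSpace d →ₗ[ℝ] M) (x y : WordSpace d) :
    itoDrift F x y = F (dropLetter 0 x) y + F x (dropLetter 0 y) +
      ∑ i : Fin d, F (dropLetter i.succ x) (dropLetter i.succ y) := by
  simp [itoDrift, LinearMap.sum_apply]

theorem itoDrift_appendLetter_appendLetter {M : Type*} [AddCommGroup M] [Module ℝ M]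
    (F : WordSpace d →ₗ[ℝ] WordSpace d →ₗ[ℝ] M) (a b : Fin (d + 1)) (x y : WordSpace d) :
    itoDrift F (appendLetter a x) (appendLetter b y) =
      (if a = 0 then F x (appendLetter b y) else 0) +
        (if b = 0 then F (appendLetter a x) y else 0) + covariationRate a b • F x y := by
  have bracket : ∑ i : Fin d, F (dropLetter i.succ (appendLetter a x))
      (dropLetter i.succ (appendLetter b y)) = covariationRate a b • F x y := by
    simp only [dropLetter_appendLetter]
    induction a using Fin.cases with
    | zero => simp [covariationRate, (Fin.succ_ne_zero _).symm]
    | succ j =>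
      rw [Finset.sum_eq_single j (fun i _ hij ↦ by simp [hij.symm]) (by simp)]
      by_cases h : b = j.succ <;> simp [covariationRate, h, eq_comm]
  rw [itoDrift_apply, bracket, dropLetter_appendLetter, dropLetter_appendLetter]
  split_ifs <;> simp

theorem dropLetter_zero_qshMul (x y : WordSpace d) :
    dropLetter 0 (qshMul x y) = itoDrift qshMul x y := by
  suffices qshMul.compr₂ (dropLetter 0) = itoDrift (qshMul (d := d)) from
    LinearMap.congr_fun₂ this x y
  refine linearMap_ext_appendLetter (LinearMap.ext fun y ↦ ?_) fun a x ↦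
    linearMap_ext_appendLetter ?_ fun b y ↦ ?_
  · simp [itoDrift_apply, dropLetter_single_nil, one_qshMul]
  · simp [itoDrift_apply, dropLetter_single_nil, qshMul_one]
  · simp [qshMul_appendLetter_appendLetter, itoDrift_appendLetter_appendLetter,
      dropLetter_appendLetter]

/-- Right quasi-shuffle multiplication by the time letter `0`. -/
noncomputable def shuffleZero : Module.End ℝ (WordSpace d) :=
  qshMul.flip (Finsupp.single [0] 1)

theorem shuffleZero_one :
    shuffleZero (Finsupp.single [] 1) = appendLetter (d := d) 0 (Finsupp.single [] 1) := by
  rw [shuffleZero, LinearMap.flip_apply, one_qshMul, appendLetter_single, List.nil_append]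

theorem shuffleZero_appendLetter (a : Fin (d + 1)) (x : WordSpace d) :
    shuffleZero (appendLetter a x) =
      appendLetter a (shuffleZero x) + appendLetter 0 (appendLetter a x) := by
  have zero_eq : Finsupp.single [0] 1 = appendLetter (d := d) 0 (Finsupp.single [] 1) := by
    rw [appendLetter_single, List.nil_append]
  have no_bracket : covariationRate a 0 = 0 := if_neg fun h ↦ h.2 h.1
  rw [shuffleZero, LinearMap.flip_apply, LinearMap.flip_apply, zero_eq,
    qshMul_appendLetter_appendLetter, qshMul_one, no_bracket, zero_smul, add_zero]

theorem dropLetter_shuffleZero (a : Fin (d + 1)) (x : WordSpace d) :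
    dropLetter a (shuffleZero x) = shuffleZero (dropLetter a x) + if a = 0 then x else 0 := by
  suffices dropLetter a ∘ₗ shuffleZero =
      shuffleZero ∘ₗ dropLetter a + if a = 0 then LinearMap.id else 0 by
    simpa [ite_apply, apply_ite] using LinearMap.congr_fun this x
  refine linearMap_ext_appendLetter ?_ fun b x ↦ ?_
  · by_cases ha : a = 0 <;>
      simp [shuffleZero_one, dropLetter_appendLetter, dropLetter_single_nil, ha, eq_comm]
  · by_cases ha : a = 0
    · by_cases hb : b = 0 <;> simp [shuffleZero_appendLetter, dropLetter_appendLetter, ha, hb]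
    · by_cases hb : b = a <;>
        simp [shuffleZero_appendLetter, dropLetter_appendLetter, ha, hb, Ne.symm ha]

/-! ### The Itô form -/

theorem hasDerivAt_pow_succ_div_factorial (n : ℕ) (t : ℝ) :
    HasDerivAt (fun s : ℝ ↦ s ^ (n + 1) / (n + 1).factorial) (t ^ n / n.factorial) t := by
  refine ((hasDerivAt_pow (n + 1) t).div_const ((n + 1).factorial : ℝ)).congr_deriv ?_
  rw [Nat.factorial_succ, Nat.add_sub_cancel]
  push_cast
  field_simp

/-- The expected signature of time-augmented Brownian motion over `[0, t]`: it sends the word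
`0⋯0` of length `k` to `t ^ k / k!` and all other words to `0`. -/
noncomputable def expectedSig (t : ℝ) : WordSpace d →ₗ[ℝ] ℝ :=
  Finsupp.linearCombination ℝ fun w ↦
    if ∀ a ∈ w, a = 0 then t ^ w.length / w.length.factorial else 0

theorem expectedSig_zero (x : WordSpace d) : expectedSig 0 x = x [] := by
  suffices expectedSig 0 = Finsupp.lapply (R := ℝ) ([] : List (Fin (d + 1))) from
    LinearMap.congr_fun this x
  ext w : 2
  rcases w with - | ⟨a, w⟩ <;> simp [expectedSig]

theorem hasDerivAt_expectedSig (x : WordSpace d) (t : ℝ) :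
    HasDerivAt (expectedSig · x) (expectedSig t (dropLetter 0 x)) t := by
  induction x using Finsupp.induction_linear with
  | zero => simpa using hasDerivAt_const t (0 : ℝ)
  | add x y hx hy => simpa only [map_add] using! hx.add hy
  | single w c =>
    rcases List.eq_nil_or_concat' w with rfl | ⟨u, a, rfl⟩
    · simpa [expectedSig, dropLetter_single_nil] using hasDerivAt_const t c
    have drop_zero : dropLetter 0 (Finsupp.single (u ++ [a]) c) =
        if a = 0 then Finsupp.single u c else 0 := by
      rw [← appendLetter_single, dropLetter_appendLetter]
    by_cases hzero : (∀ b ∈ u, b = 0) ∧ a = 0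
    · rw [drop_zero, if_pos hzero.2]
      simpa [expectedSig, or_imp, forall_and, if_pos hzero.1, hzero.2] using
        (hasDerivAt_pow_succ_div_factorial u.length t).const_mul c
    · have drift : expectedSig t (dropLetter 0 (Finsupp.single (u ++ [a]) c)) = 0 := by
        rw [drop_zero]
        split_ifs with ha
        · simp [expectedSig, mt (And.intro · ha) hzero]
        · exact map_zero _
      rw [drift]
      simpa [expectedSig, or_imp, forall_and, hzero] using hasDerivAt_const t (0 : ℝ)

/-- The bilinear form `(u, v) ↦ E[⟨u, Ŝ⟩⟨v, Ŝ⟩]` induced by the signature over `[0, t]`. -/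
noncomputable def itoForm (t : ℝ) : LinearMap.BilinForm ℝ (WordSpace d) :=
  qshMul.compr₂ (expectedSig t)

theorem itoForm_single_single (t : ℝ) (u v : List (Fin (d + 1))) :
    itoForm t (Finsupp.single u 1) (Finsupp.single v 1) = itoIP t u v := by
  simp [itoForm, qshMul_single_single, expectedSig, itoIP, Finsupp.linearCombination_apply]

theorem itoForm_zero (x y : WordSpace d) : itoForm 0 x y = x [] * y [] := by
  rw [itoForm, LinearMap.compr₂_apply, expectedSig_zero, qshMul_apply_nil]

theorem hasDerivAt_itoForm (t : ℝ) (x y : WordSpace d) :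
    HasDerivAt (fun s ↦ itoForm s x y) (itoDrift (itoForm t) x y) t := by
  have h := hasDerivAt_expectedSig (qshMul x y) t
  rw [dropLetter_zero_qshMul, itoDrift_apply, map_add, map_add, map_sum] at h
  rw [itoDrift_apply]
  exact h

/-- The span of the words of length less than `n`. -/
noncomputable def lengthLT (d n : ℕ) : Submodule ℝ (WordSpace d) :=
  Finsupp.supported ℝ ℝ {w | w.length < n}

theorem mem_lengthLT_zero {x : WordSpace d} : x ∈ lengthLT d 0 ↔ x = 0 := by
  simp [lengthLT]

theorem mem_lengthLT_succ {n : ℕ} {x : WordSpace d} :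
    x ∈ lengthLT d (n + 1) ↔ ∀ a, dropLetter a x ∈ lengthLT d n := by
  simp only [lengthLT, Finsupp.mem_supported', Set.mem_ofPred_eq, dropLetter_apply]
  refine ⟨fun h a w hw ↦ h _ (by simpa using hw), fun h w hw ↦ ?_⟩
  rcases List.eq_nil_or_concat' w with rfl | ⟨u, a, rfl⟩
  · simp at hw
  · exact h a u (by simpa using hw)

theorem lengthLT_mono : Monotone (lengthLT d) := fun _ _ h ↦
  Finsupp.supported_mono fun _ hw ↦ lt_of_lt_of_le hw h

theorem exists_mem_lengthLT (x : WordSpace d) : ∃ n, x ∈ lengthLT d n :=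
  ⟨x.support.sup List.length + 1, fun _ hw ↦ Nat.lt_succ_of_le (Finset.le_sup hw)⟩

theorem dropLetter_induction {p : WordSpace d → Prop} (zero : p 0)
    (step : ∀ x, (∀ a, p (dropLetter a x)) → p x) (x : WordSpace d) : p x := by
  obtain ⟨n, hx⟩ := exists_mem_lengthLT x
  induction n generalizing x with
  | zero => rwa [mem_lengthLT_zero.1 hx]
  | succ n ih => exact step x fun a ↦ ih _ (mem_lengthLT_succ.1 hx a)

theorem eq_zero_of_hasDerivAt_itoDrift {F : ℝ → LinearMap.BilinForm ℝ (WordSpace d)}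
    (initial : F 0 = 0)
    (deriv : ∀ t x y, HasDerivAt (fun s ↦ F s x y) (itoDrift (F t) x y) t) (t : ℝ) : F t = 0 := by
  suffices ∀ x y t, F t x y = 0 from LinearMap.ext₂ fun x y ↦ this x y t
  intro x
  induction x using dropLetter_induction with
  | zero => simp
  | step x ihx =>
    intro y
    induction y using dropLetter_induction with
    | zero => simp
    | step y ihy =>
      have deriv_zero (t : ℝ) : HasDerivAt (fun s ↦ F s x y) 0 t := by
        simpa [itoDrift_apply, ihx, ihy] using deriv t x y
      intro t
      rw [is_const_of_deriv_eq_zero (fun s ↦ (deriv_zero s).differentiableAt)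
        (fun s ↦ (deriv_zero s).deriv) t 0, initial]
      rfl

theorem itoForm_comm (t : ℝ) (x y : WordSpace d) : itoForm t x y = itoForm t y x := by
  suffices itoForm t - LinearMap.flip (itoForm t) = 0 from
    sub_eq_zero.1 (LinearMap.congr_fun₂ this x y)
  refine eq_zero_of_hasDerivAt_itoDrift
    (F := fun t ↦ itoForm t - LinearMap.flip (itoForm t)) ?_ (fun t x y ↦ ?_) t
  · ext u v
    simp [itoForm_zero, mul_comm]
  · refine ((hasDerivAt_itoForm t x y).sub (hasDerivAt_itoForm t y x)).congr_deriv ?_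
    simp only [itoDrift_apply, LinearMap.sub_apply, LinearMap.flip_apply, Finset.sum_sub_distrib]
    ring

theorem itoForm_shuffleZero (t : ℝ) (x y : WordSpace d) :
    itoForm t (shuffleZero x) y = t * itoForm t x y := by
  suffices itoForm t ∘ₗ shuffleZero - t • itoForm t = 0 by
    simpa [sub_eq_zero] using LinearMap.congr_fun₂ this x y
  refine eq_zero_of_hasDerivAt_itoDrift
    (F := fun t ↦ itoForm t ∘ₗ shuffleZero - t • itoForm t) ?_ (fun t x y ↦ ?_) t
  · ext u v
    simp [itoForm_zero, shuffleZero, qshMul_apply_nil]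
  · refine ((hasDerivAt_itoForm t (shuffleZero x) y).sub
      ((hasDerivAt_id t).mul (hasDerivAt_itoForm t x y))).congr_deriv ?_
    simp only [itoDrift_apply, dropLetter_shuffleZero, ↓reduceIte, map_add, LinearMap.add_apply,
      Fin.succ_ne_zero, add_zero, one_mul, id_eq, LinearMap.sub_apply, LinearMap.coe_comp,
      Function.comp_apply, LinearMap.smul_apply, smul_eq_mul, Finset.sum_sub_distrib,
      ← Finset.mul_sum]
    ring

/-! ### Reduction to words without trailing zero -/

theorem dropLetter_zero_mul_sub_shuffleZero (t : ℝ) :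
    dropLetter 0 * (t • 1 - shuffleZero) = (t • 1 - shuffleZero) * dropLetter (d := d) 0 - 1 := by
  refine LinearMap.ext fun x ↦ ?_
  simp only [Module.End.mul_apply, LinearMap.sub_apply, LinearMap.smul_apply, Module.End.one_apply,
    map_sub, map_smul, dropLetter_shuffleZero]
  abel

theorem pow_dropLetter_mem_lengthLT (a : Fin (d + 1)) {n : ℕ} (k : ℕ) {x : WordSpace d}
    (hx : x ∈ lengthLT d (n + k)) : (dropLetter a ^ k) x ∈ lengthLT d n := by
  induction k generalizing x with
  | zero => exact hx
  | succ k ih =>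
    rw [pow_succ, Module.End.mul_apply]
    exact ih (mem_lengthLT_succ.1 hx a)

theorem shuffleZero_mem_lengthLT {n : ℕ} {x : WordSpace d} (hx : x ∈ lengthLT d n) :
    shuffleZero x ∈ lengthLT d (n + 1) := by
  induction n generalizing x with
  | zero => simp [mem_lengthLT_zero.1 hx]
  | succ n ih =>
    refine mem_lengthLT_succ.2 fun a ↦ ?_
    rw [dropLetter_shuffleZero]
    refine add_mem (ih (mem_lengthLT_succ.1 hx a)) ?_
    split_ifs
    exacts [hx, zero_mem _]

theorem pow_sub_shuffleZero_mem_lengthLT (t : ℝ) {n : ℕ} (k : ℕ) {x : WordSpace d}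
    (hx : x ∈ lengthLT d n) :
    ((t • 1 - shuffleZero) ^ k : Module.End ℝ _) x ∈ lengthLT d (n + k) := by
  induction k with
  | zero => exact hx
  | succ k ih =>
    rw [pow_succ', Module.End.mul_apply]
    exact sub_mem (Submodule.smul_mem _ _ (lengthLT_mono (Nat.le_succ _) ih))
      (shuffleZero_mem_lengthLT ih)

theorem sub_shuffleZero_mem_ker_itoForm (t : ℝ) (x : WordSpace d) :
    (t • 1 - shuffleZero : Module.End ℝ _) x ∈ LinearMap.ker (itoForm t) := by
  refine LinearMap.mem_ker.2 (LinearMap.ext fun y ↦ ?_)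
  simp [itoForm_shuffleZero]

theorem exists_dropLetter_zero_eq_zero_sub_mem_ker (t : ℝ) {n : ℕ} {x : WordSpace d}
    (hx : x ∈ lengthLT d (n + 1)) :
    ∃ ρ ∈ lengthLT d (n + 1), dropLetter 0 ρ = 0 ∧ x - ρ ∈ LinearMap.ker (itoForm t) := by
  let a : Module.End ℝ (WordSpace d) := dropLetter 0
  let b : Module.End ℝ (WordSpace d) := t • 1 - shuffleZero
  refine ⟨normalOrderedExp ℝ b a (n + 1) x, ?_, ?_, ?_⟩
  · simp only [normalOrderedExp, LinearMap.sum_apply, LinearMap.smul_apply, Module.End.mul_apply]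
    refine sum_mem fun k hk ↦ Submodule.smul_mem _ _ ?_
    rw [← Nat.sub_add_cancel (Finset.mem_range.1 hk).le] at hx ⊢
    exact pow_sub_shuffleZero_mem_lengthLT t k (pow_dropLetter_mem_lengthLT 0 k hx)
  · have annihilate : (a ^ (n + 1)) x = 0 :=
      mem_lengthLT_zero.1 (pow_dropLetter_mem_lengthLT 0 (n + 1) (by rwa [zero_add]))
    rw [← Module.End.mul_apply,
      mul_normalOrderedExp_succ ℝ (dropLetter_zero_mul_sub_shuffleZero t), LinearMap.smul_apply,
      Module.End.mul_apply, annihilate, map_zero, smul_zero]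
  · obtain ⟨c, hc⟩ := exists_normalOrderedExp_succ_eq_one_add_mul ℝ b a n
    rw [hc, LinearMap.add_apply, Module.End.one_apply, sub_add_cancel_left, Module.End.mul_apply]
    exact neg_mem (sub_shuffleZero_mem_ker_itoForm t (c x))

theorem itoForm_self_congr {t : ℝ} {x y : WordSpace d} (h : x - y ∈ LinearMap.ker (itoForm t)) :
    itoForm t x x = itoForm t y y := by
  have eq_left : itoForm t x = itoForm t y := by rwa [LinearMap.mem_ker, map_sub, sub_eq_zero] at h
  rw [eq_left, itoForm_comm, eq_left]

theorem monotoneOn_itoForm_self {x : WordSpace d} (hx : dropLetter 0 x = 0)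
    (nonneg : ∀ (i : Fin d) (t : ℝ), 0 ≤ t →
      0 ≤ itoForm t (dropLetter i.succ x) (dropLetter i.succ x)) :
    MonotoneOn (fun t ↦ itoForm t x x) (Set.Ici 0) := by
  refine monotoneOn_of_hasDerivWithinAt_nonneg (convex_Ici 0)
    (fun t _ ↦ (hasDerivAt_itoForm t x x).continuousAt.continuousWithinAt)
    (fun t _ ↦ (hasDerivAt_itoForm t x x).hasDerivWithinAt) fun t ht ↦ ?_
  simp only [itoDrift_apply, hx, map_zero, LinearMap.zero_apply, zero_add]
  exact Finset.sum_nonneg fun i _ ↦ nonneg i t (interior_subset ht)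

theorem itoForm_self_nonneg {t : ℝ} (ht : 0 ≤ t) (x : WordSpace d) : 0 ≤ itoForm t x x := by
  obtain ⟨n, hx⟩ := exists_mem_lengthLT x
  induction n generalizing x t with
  | zero => simp [mem_lengthLT_zero.1 hx]
  | succ n ih =>
    obtain ⟨ρ, hρ, drop_zero, sub_mem_ker⟩ := exists_dropLetter_zero_eq_zero_sub_mem_ker t hx
    have mono := monotoneOn_itoForm_self drop_zero fun i s hs ↦
      ih hs _ (mem_lengthLT_succ.1 hρ i.succ)
    calc
      0 ≤ ρ [] * ρ [] := mul_self_nonneg _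
      _ = itoForm 0 ρ ρ := (itoForm_zero ρ ρ).symm
      _ ≤ itoForm t ρ ρ := mono Set.self_mem_Ici ht ht
      _ = itoForm t x x := (itoForm_self_congr sub_mem_ker).symm

theorem itoForm_self_eq_zero_iff {t : ℝ} (ht : 0 ≤ t) {x : WordSpace d} :
    itoForm t x x = 0 ↔ x ∈ LinearMap.ker (itoForm t) :=
  LinearMap.BilinForm.apply_apply_same_eq_zero_iff _ (itoForm_self_nonneg ht) ⟨itoForm_comm t⟩

theorem eq_zero_of_dropLetter_eq_zero {x : WordSpace d} (nil : x [] = 0)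
    (drop : ∀ a, dropLetter a x = 0) : x = 0 := by
  ext w
  rcases List.eq_nil_or_concat' w with rfl | ⟨u, a, rfl⟩
  exacts [nil, DFunLike.congr_fun (drop a) u]

theorem itoDrift_itoForm_eq_zero {T t : ℝ} (ht : t ∈ Set.Icc 0 T) (hT : 0 < T) {x y : WordSpace d}
    (h : ∀ s ∈ Set.Icc 0 T, itoForm s x y = 0) : itoDrift (itoForm t) x y = 0 :=
  (uniqueDiffOn_Icc hT t ht).eq_deriv _ (hasDerivAt_itoForm t x y).hasDerivWithinAt
    ((hasDerivWithinAt_const t _ (0 : ℝ)).congr h (h t ht))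

theorem eq_zero_of_forall_mem_ker_itoForm {T : ℝ} (hT : 0 < T) {x : WordSpace d}
    (h : ∀ t ∈ Set.Icc 0 T, x ∈ LinearMap.ker (itoForm t)) : x = 0 := by
  induction x using dropLetter_induction with
  | zero => rfl
  | step x ih =>
    have left_null {t : ℝ} (ht : t ∈ Set.Icc 0 T) (y : WordSpace d) : itoForm t x y = 0 :=
      LinearMap.congr_fun (h t ht) y
    have right_null {t : ℝ} (ht : t ∈ Set.Icc 0 T) (y : WordSpace d) : itoForm t y x = 0 := by
      rw [itoForm_comm, left_null ht]
    have drift_null {t : ℝ} (ht : t ∈ Set.Icc 0 T) (y : WordSpace d) :=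
      itoDrift_itoForm_eq_zero ht hT fun s hs ↦ left_null hs y
    have drop_succ (i : Fin d) : dropLetter i.succ x = 0 := by
      refine ih _ fun t ht ↦ (itoForm_self_eq_zero_iff ht.1).1 ?_
      have sum_eq_zero := drift_null ht x
      rw [itoDrift_apply, right_null ht, left_null ht, zero_add, zero_add,
        Finset.sum_eq_zero_iff_of_nonneg fun i _ ↦ itoForm_self_nonneg ht.1 _] at sum_eq_zero
      exact sum_eq_zero i (Finset.mem_univ i)
    have drop_zero : dropLetter 0 x = 0 := by
      refine ih _ fun t ht ↦ (itoForm_self_eq_zero_iff ht.1).1 ?_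
      simpa [itoDrift_apply, left_null ht, drop_succ] using drift_null ht (dropLetter 0 x)
    refine eq_zero_of_dropLetter_eq_zero ?_ (Fin.cases drop_zero drop_succ)
    have zero_mem : (0 : ℝ) ∈ Set.Icc 0 T := ⟨le_rfl, hT.le⟩
    simpa [itoForm_zero] using left_null zero_mem x

/-- The span `Sh°` of the words not ending in the time letter `0`. -/
noncomputable def noTrailingZero (d : ℕ) : Submodule ℝ (WordSpace d) :=
  Finsupp.supported ℝ ℝ {w | w.getLast? ≠ some 0}

theorem mem_noTrailingZero_iff_dropLetter_eq_zero {x : WordSpace d} :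
    x ∈ noTrailingZero d ↔ dropLetter 0 x = 0 := by
  simp only [noTrailingZero, Finsupp.mem_supported', Set.mem_ofPred_eq, not_not,
    List.getLast?_eq_some_iff, DFunLike.ext_iff, dropLetter_apply, Finsupp.zero_apply]
  exact ⟨fun h w ↦ h _ ⟨w, rfl⟩, fun h w ⟨u, hu⟩ ↦ hu ▸ h u⟩

theorem isCompl_ker_itoForm_noTrailingZero {T : ℝ} (hT : 0 < T) :
    IsCompl (LinearMap.ker (itoForm T)) (noTrailingZero d) := by
  refine ⟨Submodule.disjoint_def.2 fun x x_null x_mem ↦ ?_,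
    codisjoint_iff.2 <| eq_top_iff.2 fun x _ ↦ ?_⟩
  · have mono := monotoneOn_itoForm_self (mem_noTrailingZero_iff_dropLetter_eq_zero.1 x_mem)
      fun i t ht ↦ itoForm_self_nonneg ht _
    refine eq_zero_of_forall_mem_ker_itoForm hT fun t ht ↦ (itoForm_self_eq_zero_iff ht.1).1 ?_
    refine le_antisymm ?_ (itoForm_self_nonneg ht.1 x)
    exact (mono ht.1 hT.le ht.2).trans_eq ((itoForm_self_eq_zero_iff hT.le).2 x_null)
  · obtain ⟨n, hx⟩ := exists_mem_lengthLT x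
    obtain ⟨ρ, -, drop_zero, sub_mem_ker⟩ :=
      exists_dropLetter_zero_eq_zero_sub_mem_ker T (lengthLT_mono n.le_succ hx)
    exact Submodule.mem_sup.2 ⟨x - ρ, sub_mem_ker, ρ,
      mem_noTrailingZero_iff_dropLetter_eq_zero.2 drop_zero, sub_add_cancel x ρ⟩

theorem existsUnique_mem_sub_mem_of_isCompl {R M : Type*} [Ring R] [AddCommGroup M] [Module R M]
    {p q : Submodule R M} (h : IsCompl p q) (x : M) : ∃! y, y ∈ q ∧ x - y ∈ p := by
  obtain ⟨u, v, huv, unique⟩ := Submodule.existsUnique_add_of_isCompl h x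
  refine ⟨v, ⟨v.2, by simp [← huv]⟩, fun y hy ↦ ?_⟩
  exact congrArg Subtype.val (unique ⟨x - y, hy.2⟩ ⟨y, hy.1⟩ (sub_add_cancel x y)).2

end QuasiShuffle

open QuasiShuffle in
theorem trailing_zero_reduction_general
    {Ω : Type*} [MeasurableSpace Ω] (μ : Measure Ω) (d : ℕ) {T : ℝ} (hT : 0 < T)
    (X : List (Fin (d + 1)) → Ω → ℝ)
    (h_int : ∀ u v : List (Fin (d + 1)), Integrable (fun ω ↦ X u ω * X v ω) μ)
    (h_ip : ∀ u v : List (Fin (d + 1)), ∫ ω, X u ω * X v ω ∂μ = itoIP T u v) :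
    (∀ w : List (Fin (d + 1)), ∃ ρ : List (Fin (d + 1)) →₀ ℝ,
      (∀ u ∈ ρ.support, u.getLast? ≠ some 0) ∧
      ∀ᵐ ω ∂μ, X (w ++ [0]) ω = ρ.sum fun u c ↦ c * X u ω) ∧
    (∀ σ : List (Fin (d + 1)) →₀ ℝ, ∃! ρ : List (Fin (d + 1)) →₀ ℝ,
      (∀ u ∈ ρ.support, u.getLast? ≠ some 0) ∧
      ∫ ω, ((σ.sum fun w c ↦ c * X w ω) - ρ.sum fun u c ↦ c * X u ω) ^ 2 ∂μ = 0) := by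
  have sq_dist_eq_zero_iff (σ ρ : WordSpace d) :
      ∫ ω, ((σ.sum fun w c ↦ c * X w ω) - ρ.sum fun u c ↦ c * X u ω) ^ 2 ∂μ = 0 ↔
        σ - ρ ∈ LinearMap.ker (itoForm T) := by
    rw [sub_sq_sum_eq_linearCombination_mul,
      integral_linearCombination_mul h_int fun u v ↦
        (h_ip u v).trans (itoForm_single_single T u v).symm,
      itoForm_self_eq_zero_iff hT.le]
  have decomposition (σ : WordSpace d) : ∃! ρ : WordSpace d,
      (∀ u ∈ ρ.support, u.getLast? ≠ some 0) ∧
      ∫ ω, ((σ.sum fun w c ↦ c * X w ω) - ρ.sum fun u c ↦ c * X u ω) ^ 2 ∂μ = 0 := by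
    simp only [sq_dist_eq_zero_iff]
    exact existsUnique_mem_sub_mem_of_isCompl (isCompl_ker_itoForm_noTrailingZero hT) σ
  refine ⟨fun w ↦ ?_, decomposition⟩
  obtain ⟨ρ, ⟨ρ_mem, sq_dist_eq_zero⟩, -⟩ := decomposition (Finsupp.single (w ++ [0]) 1)
  have integrable_sq_dist := integrable_linearCombination_mul h_int
    (Finsupp.single (w ++ [0]) 1 - ρ) (Finsupp.single (w ++ [0]) 1 - ρ)
  rw [← sub_sq_sum_eq_linearCombination_mul] at integrable_sq_dist
  refine ⟨ρ, ρ_mem, ?_⟩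
  filter_upwards [ae_eq_of_integral_sub_sq_eq_zero integrable_sq_dist sq_dist_eq_zero] with ω hω
  simpa using hω

theorem trailing_zero_reduction
    {Ω : Type*} {mΩ : MeasurableSpace Ω} (μ : Measure Ω) [IsProbabilityMeasure μ]
    (d : ℕ) (T : ℝ) (hT : 0 < T)
    (X : List (Fin (d + 1)) → ℝ → Ω → ℝ)
    (h_empty : ∀ (t : ℝ) (ω : Ω), X [] t ω = 1)
    (h_time : ∀ (w : List (Fin (d + 1))) (t : ℝ) (ω : Ω),
      X (w ++ [0]) t ω = ∫ s in (0 : ℝ)..t, X w s ω)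
    (h_qsh : ∀ (u v : List (Fin (d + 1))) (t : ℝ), ∀ᵐ ω ∂μ,
      X u t ω * X v t ω = (qsh u v).sum fun w c => c * X w t ω)
    (h_int : ∀ (u v : List (Fin (d + 1))) (t : ℝ),
      Integrable (fun ω => X u t ω * X v t ω) μ)
    (h_ip : ∀ (u v : List (Fin (d + 1))) (t : ℝ), t ∈ Set.Icc 0 T →
      ∫ ω, X u t ω * X v t ω ∂μ = itoIP t u v) :
    -- every word ending in `0` is, on the signature, a combination of words not ending
    -- in `0`
    (∀ w : List (Fin (d + 1)), ∃ ρ : List (Fin (d + 1)) →₀ ℝ,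
      (∀ u ∈ ρ.support, u.getLast? ≠ some 0) ∧
      ∀ᵐ ω ∂μ, X (w ++ [0]) T ω = ρ.sum fun u c => c * X u T ω) ∧
    -- decomposition `Sh = N ⊕ Sh°`: every `σ` differs from a unique combination of
    -- words not ending in `0` by an element of the nullspace
    (∀ σ : List (Fin (d + 1)) →₀ ℝ, ∃! ρ : List (Fin (d + 1)) →₀ ℝ,
      (∀ u ∈ ρ.support, u.getLast? ≠ some 0) ∧
      ∫ ω, ((σ.sum fun w c => c * X w T ω) - ρ.sum fun u c => c * X u T ω) ^ 2 ∂μ = 0) :=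
  trailing_zero_reduction_general μ d hT (X · T) (h_int · · T) fun u v ↦ h_ip u v T ⟨hT.le, le_rfl⟩
end
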